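/- Let (P_A)_{A ⊊ N} be an equimarginal family of probability distributions on the proper subsets of N = {1,…,n} which satisfies, for every subset A ⊆ N with an odd number of elements and all x ∈ {0,1}^n, the inequalities 0 ≤ Σ_{B ⊊ N, A∪B = N} (−1)^{|A∩B|} P_B(x) ≤ 1 (with P_∅ ≡ the constant function 1). Then the function Q = Σ_{B ⊊ N} (−1)^{n−|B|−1} 2^{|B|−n} P_B satisfies −2^{−n} ≤ Q(x) ≤ 1 − 2^{−n} for all x ∈ {0,1}^n. -/

import Mathlib

/-- Flip the coordinates of `x ∈ {0,1}ⁿ` indexed by `A`. -/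
def flipOn {n : ℕ} (A : Finset (Fin n)) (x : Fin n → Bool) : Fin n → Bool :=
  fun i => if i ∈ A then !(x i) else x i

/-- The bit-flip operator `κ_A`, the composite of the `κ_i` over `i ∈ A`:
`(κ_A f)(x) = f(x with coordinates in A flipped)`. -/
def kop {n : ℕ} (A : Finset (Fin n)) (f : (Fin n → Bool) → ℝ) : (Fin n → Bool) → ℝ :=
  fun x => f (flipOn A x)

/-- The operator `M_A`, the composite of the commuting operators
`(M_i f)(x) = f(x) + f(x with i-th coordinate flipped)` over `i ∈ A`;
equivalently `(M_A f)(x) = Σ_{B ⊆ A} f(x with coordinates in B flipped)`. -/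
def Mop {n : ℕ} (A : Finset (Fin n)) (f : (Fin n → Bool) → ℝ) : (Fin n → Bool) → ℝ :=
  fun x => ∑ B ∈ A.powerset, f (flipOn B x)

/-- A probability distribution on the subset `A ⊆ N` of the binary variables:
a nonnegative function on `{0,1}ⁿ`, constant in the coordinates outside `A`,
with `M_A P_A` the constant function 1. -/
def IsDistOn {n : ℕ} (A : Finset (Fin n)) (f : (Fin n → Bool) → ℝ) : Prop :=
  (∀ x, 0 ≤ f x) ∧ (∀ i, i ∉ A → kop {i} f = f) ∧ Mop A f = fun _ => (1 : ℝ)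

/-- A family `(P_A)_{A ⊊ N}` of distributions on the proper subsets of `N` is
equimarginal if `M_{B∖A} P_B = M_{C∖A} P_C` whenever `A ⊆ B ∩ C` with `B, C ⊊ N`. -/
def Equimarginal {n : ℕ} (P : Finset (Fin n) → (Fin n → Bool) → ℝ) : Prop :=
  ∀ A B C : Finset (Fin n), B ⊂ Finset.univ → C ⊂ Finset.univ → A ⊆ B → A ⊆ C →
    Mop (B \ A) (P B) = Mop (C \ A) (P C)

/-- The sign function `σ_A(x) = Π_{i∈A} (-1)^{x_i}`. -/
def sigmaFn {n : ℕ} (A : Finset (Fin n)) (x : Fin n → Bool) : ℝ :=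
  ∏ i ∈ A, (if x i then (-1 : ℝ) else 1)

/-!
For a fixed point `x` only the numbers `p B = P_B(x)` matter. Averaging the sums `S_A` over all
`A` of odd size, the coefficient of `p B` becomes `(0 ^ |B| - (-1) ^ |Bᶜ| 2 ^ |B|) / 2 ^ n`: an `A`
with `A ∪ B = N` is `Bᶜ ∪ C` for a unique `C ⊆ B`, with sign `(-1) ^ |C|`, and the parity
condition on `A` enters as the weight `(1 - (-1) ^ |A|) / 2`. The average is therefore
`Q + 2⁻ⁿ P_∅`, and it lies in `[0, 1]` because every `S_A` with `|A|` odd does.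
-/

theorem IsDistOn.apply_empty {n : ℕ} {f : (Fin n → Bool) → ℝ} (hf : IsDistOn ∅ f)
    (x : Fin n → Bool) : f x = 1 := by
  have hflip : flipOn ∅ x = x := funext fun i ↦ by simp [flipOn]
  simpa [Mop, hflip] using congrFun hf.2.2 x

section

open Finset

section Parity

variable {α R : Type*} [CommRing R]

theorem two_mul_sum_filter_odd (s : Finset α) (k : α → ℕ) (f : α → R) :
    2 * ∑ a ∈ s with Odd (k a), f a = ∑ a ∈ s, (1 - (-1) ^ k a) * f a := by
  rw [sum_filter, mul_sum]
  refine sum_congr rfl fun a _ ↦ ?_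
  obtain heven | hodd := (k a).even_or_odd
  · simp [heven.neg_one_pow, Nat.not_odd_iff_even.2 heven]
  · rw [if_pos hodd, hodd.neg_one_pow]
    ring

theorem sum_powerset_neg_one_pow_card_eq_zero_pow (s : Finset α) :
    ∑ t ∈ s.powerset, (-1 : R) ^ #t = 0 ^ #s := by
  simpa using sum_pow_mul_eq_add_pow (-1 : R) 1 s

theorem two_mul_card_filter_odd_card_powerset {s : Finset α} (hs : s.Nonempty) :
    2 * #{t ∈ s.powerset | Odd #t} = 2 ^ #s := by
  have hsum := two_mul_sum_filter_odd s.powerset card fun _ ↦ (1 : ℤ)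
  simp only [sum_const, nsmul_one, mul_one, sum_sub_distrib, card_powerset,
    sum_powerset_neg_one_pow_card_of_nonempty hs, sub_zero] at hsum
  exact_mod_cast hsum

end Parity

variable {ι : Type*} [Fintype ι] [DecidableEq ι]

theorem compl_union_inter_of_subset {B C : Finset ι} (h : C ⊆ B) : (Bᶜ ∪ C) ∩ B = C := by
  rw [union_inter_distrib_right, inter_comm, inter_compl, empty_union, inter_eq_left.2 h]

theorem sum_filter_union_eq_univ {M : Type*} [AddCommMonoid M] (B : Finset ι) (f : Finset ι → M) :
    ∑ A with A ∪ B = univ, f A = ∑ C ∈ B.powerset, f (Bᶜ ∪ C) := by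
  have hfilter : ({A | A ∪ B = univ} : Finset (Finset ι)) = B.powerset.image (Bᶜ ∪ ·) := by
    have hIcc := Icc_eq_image_powerset (subset_univ Bᶜ)
    rw [← compl_eq_univ_sdiff, compl_compl] at hIcc
    rw [← hIcc]
    ext A
    simp [← codisjoint_iff_compl_le_left, codisjoint_iff]
  have hinj : Set.InjOn (Bᶜ ∪ ·) (B.powerset : Set (Finset ι)) :=
    Set.LeftInvOn.injOn (f₁' := (· ∩ B)) fun _ hC ↦
      compl_union_inter_of_subset (mem_powerset.1 hC)
  rw [hfilter, sum_image hinj]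

theorem two_mul_sum_odd_neg_one_pow_card_inter {R : Type*} [CommRing R] (B : Finset ι) :
    2 * ∑ A with A ∪ B = univ ∧ Odd #A, (-1 : R) ^ #(A ∩ B) =
      0 ^ #B - (-1) ^ #Bᶜ * 2 ^ #B := by
  have hterm : ∀ C ∈ B.powerset,
      (1 - (-1 : R) ^ #(Bᶜ ∪ C)) * (-1) ^ #((Bᶜ ∪ C) ∩ B) = (-1) ^ #C - (-1) ^ #Bᶜ := by
    intro C hC
    have hCB : C ⊆ B := mem_powerset.1 hC
    have hsq : (-1 : R) ^ #C * (-1) ^ #C = 1 := by simp [← mul_pow]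
    rw [compl_union_inter_of_subset hCB,
      card_union_of_disjoint (disjoint_compl_left.mono_right hCB), pow_add]
    linear_combination (-(-1 : R) ^ #Bᶜ) * hsq
  rw [← filter_filter, two_mul_sum_filter_odd, sum_filter_union_eq_univ, sum_congr rfl hterm,
    sum_sub_distrib, sum_powerset_neg_one_pow_card_eq_zero_pow, sum_const, card_powerset]
  simp [mul_comm]

/-- The signed sum of `p` over the proper subsets covering the index set together with `A`. For
`p B = P_B(x)` at a fixed point `x`, it is the quantity `S_A` in the inequality indexed by `A`. -/
def coverSum {R : Type*} [Ring R] (p : Finset ι → R) (A : Finset ι) : R :=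
  ∑ B with B ⊂ univ ∧ A ∪ B = univ, (-1) ^ #(A ∩ B) * p B

/-- The signed weighted sum of `p` over the proper subsets, which for `p B = P_B(x)` at a fixed
point `x` is `Q(x)`. The exponent `|ι| - |B| - 1` is not truncated, as `B` is proper. -/
def alternatingProperSum {K : Type*} [Field K] (p : Finset ι → K) : K :=
  ∑ B with B ⊂ univ,
    (-1) ^ (Fintype.card ι - #B - 1) * (2 ^ #B / 2 ^ Fintype.card ι) * p B

theorem two_mul_sum_odd_coverSum {R : Type*} [CommRing R] (p : Finset ι → R) :
    2 * ∑ A with Odd #A, coverSum p A =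
      ∑ B with B ⊂ univ, (0 ^ #B - (-1) ^ #Bᶜ * 2 ^ #B) * p B := by
  simp_rw [← two_mul_sum_odd_neg_one_pow_card_inter, mul_assoc, ← mul_sum, sum_mul, coverSum]
  congr 1
  refine sum_comm' fun A B ↦ ?_
  simp only [mem_filter_univ]
  tauto

theorem two_mul_sum_odd_coverSum_eq_apply_empty_add [Nonempty ι] {K : Type*} [Field K]
    [NeZero (2 : K)] (p : Finset ι → K) :
    2 * ∑ A with Odd #A, coverSum p A = p ∅ + 2 ^ Fintype.card ι * alternatingProperSum p := by
  have hempty : ∑ B : Finset ι with B ⊂ univ, 0 ^ #B * p B = p ∅ := by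
    rw [sum_eq_single_of_mem ∅ (by simp [ssubset_univ_iff, univ_nonempty.ne_empty.symm])]
    · simp
    · intro B _ hB
      simp [hB]
  have hsign : ∀ B ∈ ({B | B ⊂ univ} : Finset (Finset ι)),
      2 ^ Fintype.card ι *
        ((-1) ^ (Fintype.card ι - #B - 1) * (2 ^ #B / 2 ^ Fintype.card ι) * p B) =
      -((-1) ^ #Bᶜ * 2 ^ #B * p B) := by
    intro B hB
    have hcard : #B < Fintype.card ι := card_lt_card (mem_filter_univ B |>.1 hB)
    obtain ⟨k, hk⟩ : ∃ k, Fintype.card ι - #B = k + 1 :=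
      Nat.exists_eq_succ_of_ne_zero (Nat.sub_ne_zero_of_lt hcard)
    rw [card_compl, hk, Nat.add_sub_cancel, pow_succ (-1) k]
    field_simp
  rw [two_mul_sum_odd_coverSum, alternatingProperSum, mul_sum, sum_congr rfl hsign, sum_neg_distrib,
    ← sub_eq_add_neg, ← hempty, ← sum_sub_distrib]
  simp only [sub_mul]

theorem stmt_8_general [Nonempty ι] {K : Type*} [Field K] [LinearOrder K] [IsStrictOrderedRing K]
    (p : Finset ι → K) (hp : ∀ A, Odd #A → 0 ≤ coverSum p A ∧ coverSum p A ≤ 1) :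
    -(p ∅ / 2 ^ Fintype.card ι) ≤ alternatingProperSum p ∧
      alternatingProperSum p ≤ 1 - p ∅ / 2 ^ Fintype.card ι := by
  have hidentity := two_mul_sum_odd_coverSum_eq_apply_empty_add p
  have hnonneg : 0 ≤ ∑ A with Odd #A, coverSum p A :=
    sum_nonneg fun A hA ↦ (hp A (mem_filter_univ A |>.1 hA)).1
  have hle_card : ∑ A with Odd #A, coverSum p A ≤ #{A : Finset ι | Odd #A} := by
    simpa using sum_le_card_nsmul _ _ 1 fun A hA ↦ (hp A (mem_filter_univ A |>.1 hA)).2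
  have hcard : (2 : K) * #{A : Finset ι | Odd #A} = 2 ^ Fintype.card ι := by
    have hnat := two_mul_card_filter_odd_card_powerset (univ_nonempty (α := ι))
    rw [powerset_univ, card_univ] at hnat
    exact_mod_cast hnat
  rw [← neg_div, div_le_iff₀ (by positivity), le_sub_iff_add_le, ← le_sub_iff_add_le',
    div_le_iff₀ (by positivity)]
  constructor <;> linarith

end

/-- inequality (22) in the proof of Theorem 2.  If an equimarginal
family `(P_A)_{A ⊊ N}` satisfies the odd-subset inequalities
`0 ≤ Σ_{B ⊊ N, A∪B = N} (-1)^{|A∩B|} P_B(x) ≤ 1` for every `A ⊆ N` of odd cardinality,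
then `Q = Σ_{B ⊊ N} (-1)^{n-|B|-1} 2^{|B|-n} P_B` satisfies
`-2⁻ⁿ ≤ Q(x) ≤ 1 - 2⁻ⁿ` for all `x`. -/
theorem stmt_8 (n : ℕ) (P : Finset (Fin n) → (Fin n → Bool) → ℝ)
    (hdist : ∀ A : Finset (Fin n), A ⊂ Finset.univ → IsDistOn A (P A))
    (hequi : Equimarginal P)
    (hineq : ∀ A : Finset (Fin n), Odd A.card → ∀ x : Fin n → Bool,
      0 ≤ (∑ B ∈ Finset.univ.filter
            (fun B : Finset (Fin n) => B ⊂ Finset.univ ∧ A ∪ B = Finset.univ),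
          (-1 : ℝ) ^ (A ∩ B).card * P B x) ∧
      (∑ B ∈ Finset.univ.filter
            (fun B : Finset (Fin n) => B ⊂ Finset.univ ∧ A ∪ B = Finset.univ),
          (-1 : ℝ) ^ (A ∩ B).card * P B x) ≤ 1)
    (x : Fin n → Bool) :
    -(1 / 2 ^ n) ≤ (∑ B ∈ Finset.univ.filter (fun B : Finset (Fin n) => B ⊂ Finset.univ),
        (-1 : ℝ) ^ (n - B.card - 1) * (2 ^ B.card / 2 ^ n) * P B x) ∧
      (∑ B ∈ Finset.univ.filter (fun B : Finset (Fin n) => B ⊂ Finset.univ),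
        (-1 : ℝ) ^ (n - B.card - 1) * (2 ^ B.card / 2 ^ n) * P B x) ≤ 1 - 1 / 2 ^ n := by
  cases n with
  | zero => simp [Finset.filter_eq_empty_iff.2, Finset.eq_empty_of_isEmpty]
  | succ n =>
    have hempty : P ∅ x = 1 := (hdist ∅ Finset.univ_nonempty.empty_ssubset).apply_empty x
    simpa [coverSum, alternatingProperSum, hempty] using
      stmt_8_general (P · x) fun A hA ↦ hineq A hA x
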